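/- arXiv:2011.05170 — 3 statements merged into one kernel-verified Lean document; each statement's English description precedes it below -/
import Mathlib

section
/- Let θ = (θ_d)_{d ∈ ℕ^n×ℕ} be nonnegative reals with Σ_d θ_d · max(1,γ)^{d_y + 1} < ∞. For each r ≥ max_j d_j, the semidefinite program τ'_r := inf { Σ_{d ∈ ℕ^{n+1}_{2r}} θ_d φ_d : φ feasible at order r } attains its infimum at some feasible φ^r, and τ'_r ≤ Σ_{d ∈ ℕ^n×ℕ} θ_d μ_d. -/
open MeasureTheory Set

noncomputable section

/-- The finite set `ℕ^{n+1}_r` of multi-indices `d ∈ ℕ^n × ℕ` with `|d| ≤ r`. -/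
def idx (n r : ℕ) : Finset ((Fin n → ℕ) × ℕ) :=
  Finset.filter (fun d => (∑ i, d.1 i) + d.2 ≤ r)
    ((Fintype.piFinset fun _ : Fin n => Finset.range (r + 1)) ×ˢ Finset.range (r + 1))

/-- Multi-indices `e ∈ ℕ^n` with `|e| ≤ r`. -/
def xIdx (n r : ℕ) : Finset (Fin n → ℕ) :=
  Finset.filter (fun e => ∑ i, e i ≤ r) (Fintype.piFinset fun _ : Fin n => Finset.range (r + 1))

/-- Evaluation of a polynomial in `x` of degree `≤ r` given by its coefficients `c`. -/
def polyEval (n r : ℕ) (c : (Fin n → ℕ) → ℝ) (x : Fin n → ℝ) : ℝ :=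
  ∑ e ∈ xIdx n r, c e * ∏ i, x i ^ e i

/-- The moment matrix `M_r(φ)`, with rows and columns indexed by `ℕ^{n+1}_r`. -/
def momMat (n r : ℕ) (φ : ((Fin n → ℕ) × ℕ) → ℝ) : Matrix (idx n r) (idx n r) ℝ :=
  fun a b => φ (fun i => a.1.1 i + b.1.1 i, a.1.2 + b.1.2)

/-- The localizing matrix `M_{r−t}(g φ)` of a polynomial `g` in `x` with coefficients `c`
and degree `≤ 2t`. -/
def locMatX (n : ℕ) (c : (Fin n → ℕ) → ℝ) (t r : ℕ) (φ : ((Fin n → ℕ) × ℕ) → ℝ) :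
    Matrix (idx n (r - t)) (idx n (r - t)) ℝ :=
  fun a b => ∑ e ∈ xIdx n (2 * t),
    c e * φ (fun i => e i + a.1.1 i + b.1.1 i, a.1.2 + b.1.2)

/-- The localizing matrix `M_{r−1}(g_{m+1} φ)` of the polynomial `g_{m+1}(x,y) = y(γ−y)`. -/
def locMatY (n : ℕ) (γ : ℝ) (r : ℕ) (φ : ((Fin n → ℕ) × ℕ) → ℝ) :
    Matrix (idx n (r - 1)) (idx n (r - 1)) ℝ :=
  fun a b => γ * φ (fun i => a.1.1 i + b.1.1 i, a.1.2 + b.1.2 + 1)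
    - φ (fun i => a.1.1 i + b.1.1 i, a.1.2 + b.1.2 + 2)

/-- Feasibility of a pseudo-moment sequence `φ` at relaxation order `r`:
`M_r(φ) ⪰ 0`, `M_{r−d_j}(g_j φ) ⪰ 0` for `j = 1,…,m+1`, and `φ_d = μ_d` for all
`d ∈ D = {d : d_y ≤ 1}` with `|d| ≤ 2r`. -/
def Feasible (n m : ℕ) (γ : ℝ) (g : Fin m → (Fin n → ℕ) → ℝ) (t : Fin m → ℕ)
    (μmom : ((Fin n → ℕ) × ℕ) → ℝ) (r : ℕ) (φ : ((Fin n → ℕ) × ℕ) → ℝ) : Prop :=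
  (momMat n r φ).PosSemidef ∧
  (∀ j, (locMatX n (g j) (t j) r φ).PosSemidef) ∧
  (locMatY n γ r φ).PosSemidef ∧
  ∀ d : (Fin n → ℕ) × ℕ, d.2 ≤ 1 → (∑ i, d.1 i) + d.2 ≤ 2 * r → φ d = μmom d

lemma mem_idx' {n r : ℕ} {d : (Fin n → ℕ) × ℕ} : d ∈ idx n r ↔ (∑ i, d.1 i) + d.2 ≤ r := by
  unfold idx
  simp only [Finset.mem_filter, Finset.mem_product, Fintype.mem_piFinset, Finset.mem_range,
    and_iff_right_iff_imp]
  intro h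
  refine ⟨fun i => ?_, by omega⟩
  have := Finset.single_le_sum (f := d.1) (fun _ _ => Nat.zero_le _) (Finset.mem_univ i)
  omega

lemma mem_xIdx' {n r : ℕ} {e : Fin n → ℕ} (h : e ∈ xIdx n r) : ∑ i, e i ≤ r := by
  unfold xIdx at h
  exact (Finset.mem_filter.1 h).2

lemma psd_two {ι : Type*} {M : Matrix ι ι ℝ} (hM : M.PosSemidef)
    (i j : ι) (s u : ℝ) : 0 ≤ s ^ 2 * M i i + 2 * s * u * M i j + u ^ 2 * M j j := by
  have h := (hM.submatrix ![i, j]).dotProduct_mulVec_nonneg ![s, u]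
  have hs : M j i = M i j := by
    have := hM.1.apply i j
    simpa using this
  simp [dotProduct, Matrix.mulVec, Fin.sum_univ_two, hs] at h
  nlinarith [h]

lemma isClosed_psd {ι S : Type*} [Fintype ι] [TopologicalSpace S] (A : S → Matrix ι ι ℝ)
    (hA : ∀ a b, Continuous fun φ => A φ a b) : IsClosed {φ | (A φ).PosSemidef} := by
  simp only [Matrix.posSemidef_iff_dotProduct_mulVec, Matrix.IsHermitian.ext_iff, setOf_and,
    setOf_forall]
  refine IsClosed.inter ?_ ?_
  · refine isClosed_iInter fun i => isClosed_iInter fun j => ?_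
    exact isClosed_eq (by simpa using hA j i) (hA i j)
  · refine isClosed_iInter fun x => ?_
    refine isClosed_le continuous_const ?_
    simp only [dotProduct, Matrix.mulVec]
    exact continuous_finsetSum _ fun i _ => continuous_const.mul
      (continuous_finsetSum _ fun j _ => (hA i j).mul continuous_const)

lemma psd_int {ι Ω : Type*} [Fintype ι] [MeasurableSpace Ω] (ν : Measure Ω)
    (M : Matrix ι ι ℝ) (w : Ω → ℝ) (p : ι → Ω → ℝ) (hw : ∀ᵐ x ∂ν, 0 ≤ w x)
    (hint : ∀ a b, Integrable (fun x => w x * (p a x * p b x)) ν)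
    (hM : ∀ a b, M a b = ∫ x, w x * (p a x * p b x) ∂ν) : M.PosSemidef := by
  refine Matrix.PosSemidef.of_dotProduct_mulVec_nonneg ?_ fun v => ?_
  · refine Matrix.IsHermitian.ext fun i j => ?_
    simp only [hM, star_trivial]
    congr 1; ext x; ring
  · have : star v ⬝ᵥ (M.mulVec v) = ∫ x, w x * (∑ a, v a * p a x) ^ 2 ∂ν := by
      have h1 : ∀ x, w x * (∑ a, v a * p a x) ^ 2
          = ∑ a, ∑ b, v a * (v b * (w x * (p a x * p b x))) := by
        intro x
        rw [sq, Finset.sum_mul_sum, Finset.mul_sum]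
        refine Finset.sum_congr rfl fun a _ => ?_
        rw [Finset.mul_sum]
        refine Finset.sum_congr rfl fun b _ => ?_
        ring
      simp only [h1]
      rw [integral_finsetSum _ fun a _ => integrable_finsetSum _ fun b _ =>
        ((hint a b).const_mul _).const_mul _]
      simp only [dotProduct, Matrix.mulVec, Pi.star_apply, star_trivial]
      refine Finset.sum_congr rfl fun a _ => ?_
      rw [integral_finsetSum _ fun b _ => ((hint a b).const_mul _).const_mul _, Finset.mul_sum]
      refine Finset.sum_congr rfl fun b _ => ?_
      rw [integral_const_mul, integral_const_mul, hM]
      ring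
    rw [this]
    refine integral_nonneg_of_ae ?_
    filter_upwards [hw] with x hx
    exact mul_nonneg hx (sq_nonneg _)

lemma split_idx {n : ℕ} (d : (Fin n → ℕ) × ℕ) (k : ℕ) (hk : k ≤ (∑ i, d.1 i) + d.2) :
    ∃ a b : (Fin n → ℕ) × ℕ, a + b = d ∧ (∑ i, a.1 i) + a.2 = k := by
  induction k with
  | zero => exact ⟨0, d, by simp, by simp⟩
  | succ k ih =>
    obtain ⟨a, b, hab, ha⟩ := ih (by omega)
    subst hab
    by_cases hb : b.2 = 0
    · have : ∃ i, b.1 i ≠ 0 := by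
        by_contra! hcon
        simp [hb, hcon] at hk
        omega
      obtain ⟨i, hi⟩ := this
      refine ⟨(a.1 + Pi.single i 1, a.2), (b.1 - Pi.single i 1, b.2), ?_, ?_⟩
      · ext j
        · by_cases hj : j = i
          · subst hj; simp; omega
          · simp [hj]
        · simp
      · simp [Finset.sum_add_distrib]; omega
    · refine ⟨(a.1, a.2 + 1), (b.1, b.2 - 1), ?_, ?_⟩
      · ext j
        · simp
        · simp; omega
      · simp; omega

lemma feasible_congr {n m : ℕ} {γ : ℝ} {g : Fin m → (Fin n → ℕ) → ℝ} {t : Fin m → ℕ}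
    {μmom : ((Fin n → ℕ) × ℕ) → ℝ} {r : ℕ} (hr : 1 ≤ r) (ht : ∀ j, t j ≤ r)
    {φ ψ : ((Fin n → ℕ) × ℕ) → ℝ} (h : ∀ d ∈ idx n (2 * r), φ d = ψ d)
    (hφ : Feasible n m γ g t μmom r φ) : Feasible n m γ g t μmom r ψ := by
  obtain ⟨h1, h2, h3, h4⟩ := hφ
  refine ⟨?_, fun j => ?_, ?_, fun d hd hd' => ?_⟩
  · convert h1 using 1
    ext a b
    have ha := mem_idx'.1 a.2
    have hb := mem_idx'.1 b.2
    refine (h _ (mem_idx'.2 ?_)).symm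
    simp only [Finset.sum_add_distrib]; omega
  · convert h2 j using 1
    ext a b
    have ha := mem_idx'.1 a.2
    have hb := mem_idx'.1 b.2
    have := ht j
    refine Finset.sum_congr rfl fun e he => ?_
    have he := mem_xIdx' he
    rw [h _ (mem_idx'.2 _)]
    simp only [Finset.sum_add_distrib]; omega
  · convert h3 using 1
    ext a b
    have ha := mem_idx'.1 a.2
    have hb := mem_idx'.1 b.2
    unfold locMatY
    rw [h _ (mem_idx'.2 _), h _ (mem_idx'.2 _)] <;>
    · simp only [Finset.sum_add_distrib]; omega
  · rw [← h d (mem_idx'.2 hd')]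
    exact h4 d hd hd'

lemma feasible_bound {n m : ℕ} {γ : ℝ} (hγ : 0 < γ) {g : Fin m → (Fin n → ℕ) → ℝ} {t : Fin m → ℕ}
    {μmom : ((Fin n → ℕ) × ℕ) → ℝ} (hμ : ∀ a : Fin n → ℕ, μmom (a, 0) ≤ 1) {r : ℕ}
    {φ : ((Fin n → ℕ) × ℕ) → ℝ}
    (hφ : Feasible n m γ g t μmom r φ) (d : (Fin n → ℕ) × ℕ) (hd : d ∈ idx n (2 * r)) :
    |φ d| ≤ (max 1 γ ^ 2) ^ r := by
  obtain ⟨h1, h2, h3, h4⟩ := hφ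
  have hdiag : ∀ b : ℕ, ∀ a : Fin n → ℕ, (∑ i, a i) + b ≤ r →
      φ (fun i => a i + a i, b + b) ≤ (max 1 γ ^ 2) ^ b := by
    intro b
    induction b with
    | zero =>
      intro a ha
      rw [h4 _ (by simp) (by simp only [Finset.sum_add_distrib]; omega)]
      simpa using hμ _
    | succ b ih =>
      intro a ha
      have e1 := ih a (by omega)
      have m1 : ((a, b) : (Fin n → ℕ) × ℕ) ∈ idx n r := mem_idx'.2 (by simp only; omega)
      have m2 : ((a, b + 1) : (Fin n → ℕ) × ℕ) ∈ idx n r := mem_idx'.2 (by simp only; omega)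
      have m3 : ((a, b) : (Fin n → ℕ) × ℕ) ∈ idx n (r - 1) := mem_idx'.2 (by simp only; omega)
      have q := psd_two h1 ⟨_, m1⟩ ⟨_, m2⟩ γ (-1)
      have l := h3.diag_nonneg (i := ⟨_, m3⟩)
      have q0 := h1.diag_nonneg (i := ⟨_, m1⟩)
      simp only [momMat, locMatY] at q l q0
      have x1 : b + (b + 1) = b + b + 1 := by omega
      have x2 : b + 1 + (b + 1) = b + b + 2 := by omega
      rw [x1, x2] at q
      rw [x2, pow_succ]
      have hg : γ ^ 2 ≤ max 1 γ ^ 2 := pow_le_pow_left₀ hγ.le (le_max_right _ _) 2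
      have := mul_le_mul e1 hg (by positivity) (by positivity)
      linarith
  have hone : (1 : ℝ) ≤ max 1 γ ^ 2 := one_le_pow₀ (le_max_left _ _)
  have hdiag' : ∀ a : (Fin n → ℕ) × ℕ, (∑ i, a.1 i) + a.2 ≤ r →
      φ (fun i => a.1 i + a.1 i, a.2 + a.2) ≤ (max 1 γ ^ 2) ^ r := fun a ha =>
    (hdiag _ _ ha).trans (pow_le_pow_right₀ hone (by omega))
  have hd := mem_idx'.1 hd
  obtain ⟨a, b, hab, ha⟩ := split_idx d (min r ((∑ i, d.1 i) + d.2)) (min_le_right _ _)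
  have hb : (∑ i, b.1 i) + b.2 ≤ r := by
    subst hab
    simp [Finset.sum_add_distrib] at hd ha
    omega
  have ha : (∑ i, a.1 i) + a.2 ≤ r := by omega
  have q1 := psd_two h1 ⟨a, mem_idx'.2 ha⟩ ⟨b, mem_idx'.2 hb⟩ 1 1
  have q2 := psd_two h1 ⟨a, mem_idx'.2 ha⟩ ⟨b, mem_idx'.2 hb⟩ 1 (-1)
  have k1 := hdiag' a ha
  have k2 := hdiag' b hb
  simp only [momMat] at q1 q2
  have hd' : d = (fun i => a.1 i + b.1 i, a.2 + b.2) := by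
    subst hab; rfl
  rw [hd', abs_le]
  constructor <;> linarith

/-- For nonnegative summable weights `θ` (with
`Σ_d θ_d max(1,γ)^{d_y+1} < ∞`) and each admissible `r`, the order-`r` relaxation with
weighted objective `Σ_{|d| ≤ 2r} θ_d φ_d` attains its infimum at some feasible `φ^r`,
and its value is at most `𝒯(μ) = Σ_d θ_d μ_d`. -/
theorem weighted_sdp_attained_and_bounded
    (n m : ℕ) (hn : 1 ≤ n) (hm : 1 ≤ m)
    (γ : ℝ) (hγ : 0 < γ)
    (g : Fin m → (Fin n → ℕ) → ℝ) (t : Fin m → ℕ)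
    (hgdeg : ∀ j e, 2 * t j < ∑ i, e i → g j e = 0)
    (hg1t : t ⟨0, hm⟩ = 1)
    (hg1 : ∀ x : Fin n → ℝ,
      polyEval n (2 * t ⟨0, hm⟩) (g ⟨0, hm⟩) x = (n : ℝ) - ∑ i, x i ^ 2)
    (X : Set (Fin n → ℝ))
    (hXdef : X = {x | ∀ j, 0 ≤ polyEval n (2 * t j) (g j) x})
    (hXsub : X ⊆ Icc 0 1) (hXc : IsCompact X)
    (lam : Measure (Fin n → ℝ)) [IsProbabilityMeasure lam] (hlam : lam Xᶜ = 0)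
    (f : (Fin n → ℝ) → ℝ) (hf : Measurable f) (hfY : ∀ x ∈ X, f x ∈ Icc 0 γ)
    (μmom : ((Fin n → ℕ) × ℕ) → ℝ)
    (hμmom : ∀ d : (Fin n → ℕ) × ℕ,
      μmom d = ∫ x, (∏ i, x i ^ d.1 i) * f x ^ d.2 ∂lam)
    (θ : ((Fin n → ℕ) × ℕ) → ℝ) (hθ : ∀ d, 0 ≤ θ d)
    (hθsum : Summable fun d : (Fin n → ℕ) × ℕ => θ d * max 1 γ ^ (d.2 + 1)) :
    ∀ r : ℕ, 1 ≤ r → (∀ j, t j ≤ r) →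
      ∃ φr : ((Fin n → ℕ) × ℕ) → ℝ, Feasible n m γ g t μmom r φr ∧
        (∀ φ : ((Fin n → ℕ) × ℕ) → ℝ, Feasible n m γ g t μmom r φ →
          ∑ d ∈ idx n (2 * r), θ d * φr d ≤ ∑ d ∈ idx n (2 * r), θ d * φ d) ∧
        ∑ d ∈ idx n (2 * r), θ d * φr d ≤ ∑' d : (Fin n → ℕ) × ℕ, θ d * μmom d := by
  intro r hr ht
  have hX : ∀ᵐ x ∂lam, x ∈ X := by rwa [ae_iff]
  have hmon : ∀ d : (Fin n → ℕ) × ℕ, ∀ x ∈ X,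
      0 ≤ (∏ i, x i ^ d.1 i) * f x ^ d.2 ∧
        (∏ i, x i ^ d.1 i) * f x ^ d.2 ≤ max 1 γ ^ (d.2 + 1) ∧
        (d.2 = 0 → (∏ i, x i ^ d.1 i) * f x ^ d.2 ≤ 1) := by
    intro d x hx
    have hx1 := hXsub hx
    have hf1 := hfY x hx
    have p0 : 0 ≤ ∏ i, x i ^ d.1 i := Finset.prod_nonneg fun i _ => pow_nonneg (hx1.1 i) _
    have p1 : ∏ i, x i ^ d.1 i ≤ 1 :=
      Finset.prod_le_one (fun i _ => pow_nonneg (hx1.1 i) _)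
        fun i _ => pow_le_one₀ (hx1.1 i) (hx1.2 i)
    have f0 : 0 ≤ f x ^ d.2 := pow_nonneg hf1.1 _
    have f1 : f x ^ d.2 ≤ max 1 γ ^ d.2 :=
      pow_le_pow_left₀ hf1.1 (hf1.2.trans (le_max_right _ _)) _
    have f2 : max 1 γ ^ d.2 ≤ max 1 γ ^ (d.2 + 1) :=
      pow_le_pow_right₀ (le_max_left _ _) (by omega)
    refine ⟨mul_nonneg p0 f0, ?_, fun h => by rw [h]; simpa using p1⟩
    exact (mul_le_of_le_one_left f0 p1).trans (f1.trans f2)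
  have hint : ∀ d : (Fin n → ℕ) × ℕ,
      Integrable (fun x => (∏ i, x i ^ d.1 i) * f x ^ d.2) lam := by
    intro d
    refine Integrable.of_bound (Measurable.aestronglyMeasurable (by fun_prop))
      (max 1 γ ^ (d.2 + 1)) ?_
    filter_upwards [hX] with x hx
    rw [Real.norm_of_nonneg (hmon d x hx).1]
    exact (hmon d x hx).2.1
  have hμ0 : ∀ d, 0 ≤ μmom d := by
    intro d
    rw [hμmom]
    refine integral_nonneg_of_ae ?_
    filter_upwards [hX] with x hx using (hmon d x hx).1
  have hμle : ∀ d, ∀ C : ℝ, (∀ x ∈ X, (∏ i, x i ^ d.1 i) * f x ^ d.2 ≤ C) → μmom d ≤ C := by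
    intro d C h
    rw [hμmom]
    calc _ ≤ ∫ _, C ∂lam := integral_mono_ae (hint d) (integrable_const _) (by
            filter_upwards [hX] with x hx using h x hx)
      _ = C := by simp
  have hμ1 : ∀ a : Fin n → ℕ, μmom (a, 0) ≤ 1 := fun a =>
    hμle _ _ fun x hx => (hmon (a, 0) x hx).2.2 rfl
  have hfeas : Feasible n m γ g t μmom r μmom := by
    refine ⟨?_, fun j => ?_, ?_, fun _ _ _ => rfl⟩
    · refine psd_int lam _ (fun _ => 1) (fun a x => (∏ i, x i ^ a.1.1 i) * f x ^ a.1.2)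
        (by simp) ?_ ?_
      · intro a b
        convert hint (fun i => a.1.1 i + b.1.1 i, a.1.2 + b.1.2) using 2 with x
        simp only [pow_add, Finset.prod_mul_distrib]; ring
      · intro a b
        simp only [momMat, hμmom]
        congr 1; ext x
        simp only [pow_add, Finset.prod_mul_distrib]; ring
    · have key : ∀ (a b : idx n (r - t j)) (x : Fin n → ℝ), polyEval n (2 * t j) (g j) x *
          (((∏ i, x i ^ a.1.1 i) * f x ^ a.1.2) * ((∏ i, x i ^ b.1.1 i) * f x ^ b.1.2)) =
          ∑ e ∈ xIdx n (2 * t j), g j e *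
            ((∏ i, x i ^ (e i + a.1.1 i + b.1.1 i)) * f x ^ (a.1.2 + b.1.2)) := by
        intro a b x
        unfold polyEval
        rw [Finset.sum_mul]
        refine Finset.sum_congr rfl fun e _ => ?_
        simp only [pow_add, Finset.prod_mul_distrib]; ring
      refine psd_int lam _ (fun x => polyEval n (2 * t j) (g j) x)
        (fun a x => (∏ i, x i ^ a.1.1 i) * f x ^ a.1.2) ?_ ?_ ?_
      · filter_upwards [hX] with x hx
        rw [hXdef] at hx
        exact hx j
      · intro a b
        simp only [key]
        exact integrable_finsetSum _ fun e _ => (hint (_, _)).const_mul _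
      · intro a b
        simp only [key]
        rw [integral_finsetSum _ fun e _ => (hint (_, _)).const_mul _]
        simp only [locMatX, hμmom, integral_const_mul]
    · have key : ∀ (a b : idx n (r - 1)) (x : Fin n → ℝ), (f x * (γ - f x)) *
          (((∏ i, x i ^ a.1.1 i) * f x ^ a.1.2) * ((∏ i, x i ^ b.1.1 i) * f x ^ b.1.2)) =
          γ * ((∏ i, x i ^ (a.1.1 i + b.1.1 i)) * f x ^ (a.1.2 + b.1.2 + 1)) -
            ((∏ i, x i ^ (a.1.1 i + b.1.1 i)) * f x ^ (a.1.2 + b.1.2 + 2)) := by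
        intro a b x
        simp only [pow_add, Finset.prod_mul_distrib]; ring
      refine psd_int lam _ (fun x => f x * (γ - f x))
        (fun a x => (∏ i, x i ^ a.1.1 i) * f x ^ a.1.2) ?_ ?_ ?_
      · filter_upwards [hX] with x hx
        exact mul_nonneg (hfY x hx).1 (sub_nonneg.2 (hfY x hx).2)
      · intro a b
        simp only [key]
        exact ((hint (_, _)).const_mul _).sub (hint (_, _))
      · intro a b
        simp only [key]
        rw [integral_sub ((hint (_, _)).const_mul _) (hint (_, _))]
        simp only [locMatY, hμmom, integral_const_mul]
  -- truncation
  let T : (((Fin n → ℕ) × ℕ) → ℝ) → (((Fin n → ℕ) × ℕ) → ℝ) := fun φ d =>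
    if d ∈ idx n (2 * r) then φ d else 0
  have hT : ∀ φ, ∀ d ∈ idx n (2 * r), φ d = T φ d := fun φ d hd => by simp [T, hd]
  let C : ℝ := (max 1 γ ^ 2) ^ r
  have hC : 0 ≤ C := by positivity
  let K : Set (((Fin n → ℕ) × ℕ) → ℝ) :=
    {φ | Feasible n m γ g t μmom r φ} ∩ Set.pi univ fun _ => Icc (-C) C
  have hTK : ∀ φ, Feasible n m γ g t μmom r φ → T φ ∈ K := by
    intro φ hφ
    refine ⟨feasible_congr hr ht (hT φ) hφ, fun d _ => ?_⟩
    by_cases hd : d ∈ idx n (2 * r)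
    · rw [← hT φ d hd]
      exact abs_le.1 (feasible_bound hγ hμ1 hφ d hd)
    · simp only [T, hd, if_false]
      exact ⟨by linarith, hC⟩
  have hcl : IsClosed {φ | Feasible n m γ g t μmom r φ} := by
    simp only [Feasible, setOf_and, setOf_forall]
    refine IsClosed.inter (isClosed_psd _ fun a b => ?_) (IsClosed.inter
      (isClosed_iInter fun j => isClosed_psd _ fun a b => ?_)
      (IsClosed.inter (isClosed_psd _ fun a b => ?_) ?_))
    · exact continuous_apply _
    · exact continuous_finsetSum _ fun e _ => continuous_const.mul (continuous_apply _)
    · exact (continuous_const.mul (continuous_apply _)).sub (continuous_apply _)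
    · exact isClosed_iInter fun d => isClosed_iInter fun _ => isClosed_iInter fun _ =>
        isClosed_eq (continuous_apply _) continuous_const
  have hK : IsCompact K := (isCompact_univ_pi fun _ => isCompact_Icc).inter_left hcl
  have hobj : Continuous fun φ : ((Fin n → ℕ) × ℕ) → ℝ => ∑ d ∈ idx n (2 * r), θ d * φ d :=
    continuous_finsetSum _ fun d _ => continuous_const.mul (continuous_apply _)
  obtain ⟨φr, hφr, hmin⟩ := hK.exists_isMinOn ⟨_, hTK _ hfeas⟩ hobj.continuousOn
  have hall : ∀ φ : ((Fin n → ℕ) × ℕ) → ℝ, Feasible n m γ g t μmom r φ →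
          ∑ d ∈ idx n (2 * r), θ d * φr d ≤ ∑ d ∈ idx n (2 * r), θ d * φ d := by
    intro φ hφ
    refine (isMinOn_iff.1 hmin _ (hTK φ hφ)).trans (le_of_eq ?_)
    exact Finset.sum_congr rfl fun d hd => by rw [← hT φ d hd]
  refine ⟨φr, hφr.1, hall, (hall _ hfeas).trans ?_⟩
  refine Summable.sum_le_tsum _ (fun d _ => mul_nonneg (hθ d) (hμ0 d)) ?_
  refine Summable.of_nonneg_of_le (fun d => mul_nonneg (hθ d) (hμ0 d)) (fun d => ?_) hθsum
  exact mul_le_mul_of_nonneg_left (hμle d _ fun x hx => (hmon d x hx).2.1) (hθ d)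
end
end

section
/- Let f : [−1,1] → [−1,1] be defined by f(x) = −1 + √((1+x)(3−x)), and let λ be the measure on [−1,1] with density x ↦ (1−x)/2 with respect to Lebesgue measure. Then the pushforward measure f_*λ is the measure on [−1,1] with density y ↦ (1+y)/2 with respect to Lebesgue measure. -/
open MeasureTheory Set

noncomputable section

lemma pot_image : (fun x : ℝ => -1 + Real.sqrt ((1 + x) * (3 - x))) '' Ioo (-1 : ℝ) 1
    = Ioo (-1 : ℝ) 1 := by
  ext y
  simp only [mem_image, mem_Ioo]
  constructor
  · rintro ⟨x, ⟨h1, h2⟩, rfl⟩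
    have h : 0 < (1 + x) * (3 - x) := mul_pos (by linarith) (by linarith)
    have h3 := Real.sqrt_pos.2 h
    have h4 : Real.sqrt ((1 + x) * (3 - x)) < 2 := by
      rw [Real.sqrt_lt' (by norm_num)]
      nlinarith
    constructor <;> linarith
  · rintro ⟨h1, h2⟩
    have h : 0 < 4 - (1 + y) ^ 2 := by nlinarith
    have h3 := Real.sqrt_pos.2 h
    have h5 := Real.sq_sqrt h.le
    have h4 : Real.sqrt (4 - (1 + y) ^ 2) < 2 := by
      rw [Real.sqrt_lt' (by norm_num)]
      nlinarith
    refine ⟨1 - Real.sqrt (4 - (1 + y) ^ 2), ⟨by linarith, by linarith⟩, ?_⟩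
    have : (1 + (1 - Real.sqrt (4 - (1 + y) ^ 2))) * (3 - (1 - Real.sqrt (4 - (1 + y) ^ 2)))
      = (1 + y) ^ 2 := by nlinarith
    rw [this, Real.sqrt_sq (by linarith)]
    ring

/-- The map `f(x) = −1 + √((1+x)(3−x))` pushes the measure with density
`(1−x)/2` on `[−1,1]` forward to the measure with density `(1+y)/2` on `[−1,1]`. -/
theorem pushforward_optimal_transport_map :
    ((volume.restrict (Icc (-1 : ℝ) 1)).withDensity
        (fun x => ENNReal.ofReal ((1 - x) / 2))).map
        (fun x => -1 + Real.sqrt ((1 + x) * (3 - x)))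
      = (volume.restrict (Icc (-1 : ℝ) 1)).withDensity
          (fun y => ENNReal.ofReal ((1 + y) / 2)) := by
  have hm : Measurable (fun x : ℝ => -1 + Real.sqrt ((1 + x) * (3 - x))) := by fun_prop
  rw [← restrict_Ioo_eq_restrict_Icc]
  ext B hB
  rw [Measure.map_apply hm hB, withDensity_apply _ (hm hB), withDensity_apply _ hB,
    ← lintegral_indicator (hm hB), ← lintegral_indicator hB]
  conv_rhs => rw [← pot_image]
  rw [lintegral_image_eq_lintegral_deriv_mul_of_monotoneOn (s := Ioo (-1 : ℝ) 1)
    (f' := fun x => (1 - x) / Real.sqrt ((1 + x) * (3 - x))) measurableSet_Ioo]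
  · refine setLIntegral_congr_fun measurableSet_Ioo ?_
    rintro x ⟨h1, h2⟩
    have h : 0 < (1 + x) * (3 - x) := mul_pos (by linarith) (by linarith)
    have h3 := Real.sqrt_pos.2 h
    by_cases hx : -1 + Real.sqrt ((1 + x) * (3 - x)) ∈ B
    · simp only [indicator, mem_preimage, hx, if_true]
      rw [← ENNReal.ofReal_mul (div_nonneg (by linarith) h3.le)]
      congr 1
      field_simp
      ring
    · simp [indicator, hx]
  · rintro x ⟨h1, h2⟩
    have h : 0 < (1 + x) * (3 - x) := mul_pos (by linarith) (by linarith)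
    have h3 := Real.sqrt_pos.2 h
    have hd : HasDerivAt (fun x : ℝ => (1 + x) * (3 - x)) (1 * (3 - x) + (1 + x) * (-1)) x :=
      ((hasDerivAt_id x).const_add 1).mul ((hasDerivAt_id x).const_sub 3)
    have := ((hd.sqrt h.ne').const_add (-1)).hasDerivWithinAt (s := Ioo (-1 : ℝ) 1)
    refine this.congr_deriv ?_
    field_simp
    ring
  · rintro x ⟨h1, h2⟩ y ⟨h3, h4⟩ hxy
    have : (1 + x) * (3 - x) ≤ (1 + y) * (3 - y) := by nlinarith
    have := Real.sqrt_le_sqrt this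
    simpa using this
end
end

section
/- Let f : [0,1] → [0,1] be defined by f(x) = 2/3 + 4x/3 for x ∈ [0,1/4], f(x) = 2 − 4x for x ∈ (1/4,1/3], and f(x) = 1 − x for x ∈ (1/3,1]. Then the pushforward of Lebesgue measure on [0,1] under f is Lebesgue measure on [0,1]. -/
open MeasureTheory Set

noncomputable section

/-- The optimal transport map of the non-convex transport example: `f(x) = 2/3 + 4x/3`
on `[0,1/4]`, `f(x) = 2 − 4x` on `(1/4,1/3]`, and `f(x) = 1 − x` on `(1/3,1]`. -/
def transportMap (x : ℝ) : ℝ :=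
  if x ≤ 1 / 4 then 2 / 3 + 4 * x / 3 else if x ≤ 1 / 3 then 2 - 4 * x else 1 - x

theorem transportMap_measurable : Measurable transportMap := by
  unfold transportMap
  refine Measurable.ite measurableSet_Iic (by fun_prop) ?_
  exact Measurable.ite measurableSet_Iic (by fun_prop) (by fun_prop)

/-- The pushforward of Lebesgue measure on `[0,1]` under the piecewise
map `transportMap` is Lebesgue measure on `[0,1]`. -/
theorem pushforward_piecewise_map :
    (volume.restrict (Icc (0 : ℝ) 1)).map transportMap
      = volume.restrict (Icc (0 : ℝ) 1) := by
  haveI : IsFiniteMeasure ((volume.restrict (Icc (0 : ℝ) 1)).map transportMap) :=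
    Measure.isFiniteMeasure_map _ _
  refine Measure.ext_of_Iic _ _ fun a => ?_
  rw [Measure.map_apply transportMap_measurable measurableSet_Iic,
    Measure.restrict_apply (transportMap_measurable measurableSet_Iic),
    Measure.restrict_apply measurableSet_Iic]
  rcases lt_or_ge a 0 with h0 | h0
  · have h1 : transportMap ⁻¹' Iic a ∩ Icc 0 1 = ∅ := by
      ext x
      simp only [mem_inter_iff, mem_preimage, mem_Iic, mem_Icc, mem_empty_iff_false, iff_false]
      rintro ⟨h, h2, h3⟩
      unfold transportMap at h
      split_ifs at h <;> linarith
    have h2 : Iic a ∩ Icc 0 1 = ∅ := by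
      ext x
      simp only [mem_inter_iff, mem_Iic, mem_Icc, mem_empty_iff_false, iff_false]
      rintro ⟨h, h2, h3⟩
      linarith
    rw [h1, h2]
  rcases le_or_gt 1 a with h1 | h1
  · have h1 : transportMap ⁻¹' Iic a ∩ Icc 0 1 = Icc 0 1 := by
      ext x
      simp only [mem_inter_iff, mem_preimage, mem_Iic, mem_Icc, and_iff_right_iff_imp]
      rintro ⟨h2, h3⟩
      unfold transportMap
      split_ifs <;> linarith
    have h2 : Iic a ∩ Icc 0 1 = Icc 0 1 := by
      ext x
      simp only [mem_inter_iff, mem_Iic, mem_Icc, and_iff_right_iff_imp]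
      rintro ⟨h2, h3⟩
      linarith
    rw [h1, h2]
  have hR : Iic a ∩ Icc 0 1 = Icc 0 a := by
    ext x
    simp only [mem_inter_iff, mem_Iic, mem_Icc]
    constructor
    · rintro ⟨h, h2, h3⟩
      exact ⟨h2, h⟩
    · rintro ⟨h2, h⟩
      exact ⟨h, h2, by linarith⟩
  rcases lt_or_ge a (2 / 3) with h2 | h2
  · have hL : transportMap ⁻¹' Iic a ∩ Icc 0 1 = Icc (1 - a) 1 := by
      ext x
      simp only [mem_inter_iff, mem_preimage, mem_Iic, mem_Icc]
      unfold transportMap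
      constructor
      · rintro ⟨h, h3, h4⟩
        split_ifs at h <;> constructor <;> linarith
      · rintro ⟨h3, h4⟩
        refine ⟨?_, by linarith, h4⟩
        split_ifs <;> linarith
    rw [hL, hR, Real.volume_Icc, Real.volume_Icc]
    congr 1
    ring
  · have hL : transportMap ⁻¹' Iic a ∩ Icc 0 1
        = Icc 0 ((a - 2 / 3) * (3 / 4)) ∪ Icc ((2 - a) / 4) 1 := by
      ext x
      simp only [mem_inter_iff, mem_preimage, mem_Iic, mem_Icc, mem_union]
      unfold transportMap
      constructor
      · rintro ⟨h, h3, h4⟩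
        split_ifs at h
        · left; constructor <;> linarith
        · right; constructor <;> linarith
        · right; constructor <;> linarith
      · rintro (⟨h3, h4⟩ | ⟨h3, h4⟩)
        · refine ⟨?_, by linarith, by linarith⟩
          split_ifs <;> linarith
        · refine ⟨?_, by linarith, by linarith⟩
          split_ifs <;> linarith
    have hd : Disjoint (Icc 0 ((a - 2 / 3) * (3 / 4))) (Icc ((2 - a) / 4) 1) := by
      rw [Set.disjoint_left]
      rintro x ⟨_, h3⟩ ⟨h4, _⟩
      linarith
    rw [hL, hR, measure_union hd measurableSet_Icc, Real.volume_Icc, Real.volume_Icc,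
      Real.volume_Icc, ← ENNReal.ofReal_add (by linarith) (by linarith)]
    congr 1
    ring
end
end
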